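/- Let $\nu\geq 0$, $\kappa>0$, and $\Lambda(z)=\prod_{k=1}^{\infty}\left(1+\frac{iz}{(\kappa j_{\nu,k})^2}\right)$. Then $|\Lambda(z)|\leq \exp(\sqrt{|z|}/\kappa)$ for all $z\in\mathbb{C}$, and $|\Lambda(x)|\leq\exp(\sqrt{|x|}/(\sqrt{2}\kappa))$ for all real $x$. -/

import Mathlib

open MeasureTheory Set

/-- Bessel function of the first kind (real argument, via its power series). -/
noncomputable def besselJ (ν x : ℝ) : ℝ :=
  ∑' m : ℕ, ((-1 : ℝ) ^ m / ((m.factorial : ℝ) * Real.Gamma ((m : ℝ) + ν + 1))) *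
    (x / 2) ^ (2 * (m : ℝ) + ν)

/-- `j` enumerates (in increasing order, starting at `k = 0` for the first one)
all the positive zeros of the Bessel function `J_ν`. -/
def IsBesselZeros (ν : ℝ) (j : ℕ → ℝ) : Prop :=
  StrictMono j ∧ (∀ k, 0 < j k) ∧ (∀ k, besselJ ν (j k) = 0) ∧
    (∀ x, 0 < x → besselJ ν x = 0 → ∃ k, j k = x)

/-!
By Poisson's integral, `Γ(ν + 1) (2 / w) ^ ν J_ν(w)` is the average of `cos (w √s)` over the
Beta(1/2, ν + 1/2) law of `s`, hence `f(w²)` for an entire `f` with `f 0 = 1` and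
`|f(w²)| ≤ exp |Im w|`. Averaging this bound over a circle, where
`|Im √u| = √|u| |sin (arg u / 2)|`, Jensen's formula gives `∑ log⁺(s / |u|) ≤ (2 / π) √s` over
distinct zeros `u` of `f`.

The product is then estimated from its zeros alone, without the Hadamard factorization of `f`: since
`log (1 + y) = ∫₀¹ log⁺(y t / (1 - t)) dt` and `∫₀¹ (t / (1 - t)) ^ β dt = π β / sin (π β)`,
a bound `∑ log⁺(s / b) ≤ A s ^ β` yields `∑ log (1 + s / b) ≤ A (π β / sin (π β)) s ^ β`.
Taking `b = |u|`, `β = 1/2` gives the bound at complex arguments by `|1 + z / u| ≤ 1 + |z| / |u|`.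
Taking `b = |u|²`, `β = 1/4` gives the sharper one, as `|1 + i x / u|² = 1 + (x / u)²` for real
`x` and `u`.
-/

section Averages

open Real ProbabilityTheory

lemma setIntegral_rpow_mul_one_sub_rpow {α β : ℝ} (hα : 0 < α) (hβ : 0 < β) :
    ∫ x in Ioo 0 1, x ^ (α - 1) * (1 - x) ^ (β - 1) = beta α β := by
  have hpos : ∀ x ∈ Ioo (0 : ℝ) 1, 0 ≤ 1 / beta α β * x ^ (α - 1) * (1 - x) ^ (β - 1) :=
    fun x hx ↦ by simpa only [betaPDFReal, if_pos (mem_Ioo.1 hx)]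
      using (betaPDFReal_pos hx.1 hx.2 hα hβ).le
  have hone : ∫ x in Ioo 0 1, 1 / beta α β * x ^ (α - 1) * (1 - x) ^ (β - 1) = 1 := by
    rw [integral_eq_lintegral_of_nonneg_ae (ae_restrict_of_forall_mem measurableSet_Ioo hpos)
      (Measurable.aestronglyMeasurable (by fun_prop)), ← lintegral_betaPDF,
      lintegral_betaPDF_eq_one hα hβ, ENNReal.toReal_one]
  simp_rw [mul_assoc, integral_const_mul] at hone
  field_simp [(beta_pos hα hβ).ne'] at hone
  exact hone

lemma beta_one_add_one_sub {β : ℝ} (hβ : β ≠ 0) :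
    beta (1 + β) (1 - β) = π * β / sin (π * β) := by
  rw [beta, add_add_sub_cancel, one_add_one_eq_two, Gamma_two, div_one, add_comm 1 β,
    Gamma_add_one hβ, mul_assoc, Gamma_mul_Gamma_one_sub]
  ring

lemma integral_odds_rpow {β : ℝ} (hβ : 0 < β) (hβ' : β < 1) :
    ∫ t in (0 : ℝ)..1, (t / (1 - t)) ^ β = π * β / sin (π * β) := by
  rw [← beta_one_add_one_sub hβ.ne',
    ← setIntegral_rpow_mul_one_sub_rpow (by linarith) (by linarith),
    intervalIntegral.integral_of_le zero_le_one, integral_Ioc_eq_integral_Ioo]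
  refine setIntegral_congr_fun measurableSet_Ioo fun t ht ↦ ?_
  have ht' : 0 ≤ 1 - t := sub_nonneg.2 ht.2.le
  simp only [div_rpow ht.1.le ht', add_sub_cancel_left, sub_sub_cancel_left, rpow_neg ht']
  exact div_eq_mul_inv _ _

lemma intervalIntegrable_odds_rpow {β : ℝ} (hβ : 0 < β) (hβ' : β < 1) :
    IntervalIntegrable (fun t : ℝ ↦ (t / (1 - t)) ^ β) volume 0 1 := by
  refine not_imp_comm.1 intervalIntegral.integral_undef ?_
  rw [integral_odds_rpow hβ hβ']
  have : 0 < sin (π * β) := sin_pos_of_pos_of_lt_pi (by positivity) (by nlinarith [pi_pos])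
  positivity

-- The threshold `(1 + y)⁻¹` is where `y * (t / (1 - t))` crosses `1`.
lemma posLog_mul_odds_of_le {y t : ℝ} (hy : 0 < y) (ht : 0 ≤ t) (hty : t ≤ (1 + y)⁻¹) :
    log⁺ (y * (t / (1 - t))) = 0 := by
  have h : t * (1 + y) ≤ 1 := by rwa [← one_div, le_div_iff₀ (by positivity)] at hty
  have ht' : 0 < 1 - t := by
    have : t < 1 := hty.trans_lt (inv_lt_one_of_one_lt₀ (by linarith))
    linarith
  rw [posLog_eq_zero_iff, abs_of_nonneg (by positivity), ← mul_div_assoc, div_le_one ht']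
  linarith

lemma hasDerivAt_mul_log_sub_binEntropy {y t : ℝ} (hy : 0 < y) (hty : (1 + y)⁻¹ < t)
    (ht : t < 1) :
    HasDerivAt (fun t ↦ t * log y - binEntropy t) (log⁺ (y * (t / (1 - t)))) t := by
  have ht0 : 0 < t := (inv_pos.2 (by positivity)).trans hty
  have ht' : 0 < 1 - t := sub_pos.2 ht
  have h : 1 < t * (1 + y) := by rwa [← one_div, div_lt_iff₀ (by positivity)] at hty
  have hlog : log⁺ (y * (t / (1 - t))) = 1 * log y - (log (1 - t) - log t) := by
    rw [posLog_eq_log, log_mul hy.ne' (by positivity), log_div ht0.ne' ht'.ne']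
    · ring
    · rw [abs_of_nonneg (by positivity), ← mul_div_assoc, one_le_div ht']
      linarith
  rw [hlog]
  exact ((hasDerivAt_id t).mul_const (log y)).sub (hasDerivAt_binEntropy ht0.ne' ht.ne)

lemma continuous_mul_log_sub_binEntropy (y : ℝ) :
    Continuous fun t ↦ t * log y - binEntropy t :=
  (continuous_id.mul_const _).sub binEntropy_continuous

lemma inv_one_add_mul_log_sub_binEntropy {y : ℝ} (hy : 0 < y) :
    (1 + y)⁻¹ * log y - binEntropy (1 + y)⁻¹ = log y - log (1 + y) := by
  have h : 1 - (1 + y)⁻¹ = y * (1 + y)⁻¹ := by field_simp; ring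
  rw [binEntropy, h, mul_inv, inv_inv, log_mul (by positivity) (by positivity), log_inv]
  field_simp
  ring

lemma inv_one_add_mem_Ioo {y : ℝ} (hy : 0 < y) : (1 + y)⁻¹ ∈ Ioo 0 1 :=
  ⟨by positivity, inv_lt_one_of_one_lt₀ (by linarith)⟩

lemma eqOn_posLog_mul_odds_zero {y : ℝ} (hy : 0 < y) :
    EqOn 0 (fun t ↦ log⁺ (y * (t / (1 - t)))) (uIoo 0 (1 + y)⁻¹) := by
  rw [uIoo_of_le (inv_one_add_mem_Ioo hy).1.le]
  exact fun t ht ↦ (posLog_mul_odds_of_le hy ht.1.le ht.2.le).symm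

lemma intervalIntegrable_posLog_mul_odds_left {y : ℝ} (hy : 0 < y) :
    IntervalIntegrable (fun t ↦ log⁺ (y * (t / (1 - t)))) volume 0 (1 + y)⁻¹ :=
  intervalIntegrable_const.congr_uIoo (eqOn_posLog_mul_odds_zero hy)

lemma intervalIntegrable_posLog_mul_odds_right {y : ℝ} (hy : 0 < y) :
    IntervalIntegrable (fun t ↦ log⁺ (y * (t / (1 - t)))) volume (1 + y)⁻¹ 1 := by
  refine intervalIntegral.intervalIntegrable_deriv_of_nonneg
    (continuous_mul_log_sub_binEntropy y).continuousOn (fun t ht ↦ ?_) fun _ _ ↦ posLog_nonneg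
  rw [min_eq_left (inv_one_add_mem_Ioo hy).2.le, max_eq_right (inv_one_add_mem_Ioo hy).2.le] at ht
  exact hasDerivAt_mul_log_sub_binEntropy hy ht.1 ht.2

lemma intervalIntegrable_posLog_mul_odds {y : ℝ} (hy : 0 < y) :
    IntervalIntegrable (fun t ↦ log⁺ (y * (t / (1 - t)))) volume 0 1 :=
  (intervalIntegrable_posLog_mul_odds_left hy).trans (intervalIntegrable_posLog_mul_odds_right hy)

theorem integral_posLog_mul_odds {y : ℝ} (hy : 0 < y) :
    ∫ t in (0 : ℝ)..1, log⁺ (y * (t / (1 - t))) = log (1 + y) := by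
  rw [← intervalIntegral.integral_add_adjacent_intervals
      (intervalIntegrable_posLog_mul_odds_left hy) (intervalIntegrable_posLog_mul_odds_right hy),
    ← intervalIntegral.integral_congr_uIoo (eqOn_posLog_mul_odds_zero hy),
    intervalIntegral.integral_eq_sub_of_hasDerivAt_of_le (inv_one_add_mem_Ioo hy).2.le
      (continuous_mul_log_sub_binEntropy y).continuousOn
      (fun t ht ↦ hasDerivAt_mul_log_sub_binEntropy hy ht.1 ht.2)
      (intervalIntegrable_posLog_mul_odds_right hy),
    inv_one_add_mul_log_sub_binEntropy hy, binEntropy_one]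
  simp only [Pi.zero_apply, intervalIntegral.integral_zero, one_mul]
  ring

theorem sum_log_one_add_div_le {ι : Type*} {S : Finset ι} {b : ι → ℝ} {A β : ℝ}
    (hb : ∀ k ∈ S, 0 < b k) (hβ : 0 < β) (hβ' : β < 1)
    (hA : ∀ s, 0 < s → ∑ k ∈ S, log⁺ (s / b k) ≤ A * s ^ β) {x : ℝ} (hx : 0 < x) :
    ∑ k ∈ S, log (1 + x / b k) ≤ A * (π * β / sin (π * β)) * x ^ β := by
  have hint : ∀ k ∈ S,
      IntervalIntegrable (fun t ↦ log⁺ (x / b k * (t / (1 - t)))) volume 0 1 :=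
    fun k hk ↦ intervalIntegrable_posLog_mul_odds (div_pos hx (hb k hk))
  calc ∑ k ∈ S, log (1 + x / b k)
      = ∫ t in (0 : ℝ)..1, ∑ k ∈ S, log⁺ (x / b k * (t / (1 - t))) := by
        rw [intervalIntegral.integral_finsetSum hint]
        exact Finset.sum_congr rfl fun k hk ↦
          (integral_posLog_mul_odds (div_pos hx (hb k hk))).symm
    _ ≤ ∫ t in (0 : ℝ)..1, A * x ^ β * (t / (1 - t)) ^ β := by
        refine intervalIntegral.integral_mono_on_of_le_Ioo zero_le_one
          (by simpa only [Finset.sum_fn] using IntervalIntegrable.sum _ hint)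
          ((intervalIntegrable_odds_rpow hβ hβ').const_mul _) fun t ht ↦ ?_
        have hodds : 0 < t / (1 - t) := div_pos ht.1 (sub_pos.2 ht.2)
        rw [mul_assoc, ← mul_rpow hx.le hodds.le]
        simpa only [mul_div_right_comm] using hA _ (mul_pos hx hodds)
    _ = A * (π * β / sin (π * β)) * x ^ β := by
        rw [intervalIntegral.integral_const_mul, integral_odds_rpow hβ hβ']
        ring

end Averages

section Jensen

open Real Metric MeromorphicOn

lemma one_le_divisor_of_eq_zero {f : ℂ → ℂ} {U : Set ℂ} {c u : ℂ} (hf : AnalyticOnNhd ℂ f U)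
    (hU : IsPreconnected U) (hc : c ∈ U) (hfc : f c ≠ 0) (hu : u ∈ U) (hfu : f u = 0) :
    1 ≤ divisor f U u := by
  have hc_top : analyticOrderAt f c ≠ ⊤ := by
    simp only [(hf c hc).analyticOrderAt_eq_zero.2 hfc, ne_eq, ENat.zero_ne_top, not_false_eq_true]
  obtain ⟨n, hn⟩ := ENat.ne_top_iff_exists.1
    (hf.analyticOrderAt_ne_top_of_isPreconnected hU hc hu hc_top)
  have hn0 : n ≠ 0 := by
    rintro rfl
    exact (hf u hu).analyticOrderAt_ne_zero.2 hfu hn.symm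
  have hdiv : divisor f U u = n := by
    rw [MeromorphicOn.AnalyticOnNhd.divisor_apply hf hu, ← hn]
    rfl
  lia

lemma divisor_mul_log_nonneg {f : ℂ → ℂ} {c : ℂ} {R : ℝ}
    (hf : AnalyticOnNhd ℂ f (closedBall c R)) (u : ℂ) :
    0 ≤ divisor f (closedBall c R) u * log (R * ‖c - u‖⁻¹) := by
  by_cases hu : u ∈ closedBall c R
  · refine mul_nonneg (mod_cast MeromorphicOn.AnalyticOnNhd.divisor_nonneg hf u) ?_
    rcases eq_or_ne c u with rfl | hcu
    · simp
    · rw [mem_closedBall', dist_eq_norm] at hu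
      rw [← div_eq_mul_inv]
      exact log_nonneg ((one_le_div (norm_pos_iff.2 (sub_ne_zero.2 hcu))).2 hu)
  · simp [hu]

lemma posLog_le_divisor_mul_log {f : ℂ → ℂ} {c u : ℂ} {R : ℝ} (hR : 0 < R)
    (hf : AnalyticOnNhd ℂ f (closedBall c R)) (hfc : f c ≠ 0) (hfu : f u = 0) :
    log⁺ (R / ‖c - u‖) ≤ divisor f (closedBall c R) u * log (R * ‖c - u‖⁻¹) := by
  refine max_le (divisor_mul_log_nonneg hf u) ?_
  rw [← div_eq_mul_inv]
  have hcu : 0 < ‖c - u‖ := norm_pos_iff.2 (sub_ne_zero.2 (by rintro rfl; exact hfc hfu))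
  by_cases hu : u ∈ closedBall c R
  · have hone : (1 : ℝ) ≤ divisor f (closedBall c R) u := mod_cast one_le_divisor_of_eq_zero hf
      (convex_closedBall c R).isPreconnected (mem_closedBall_self hR.le) hfc hu hfu
    rw [mem_closedBall', dist_eq_norm] at hu
    exact le_mul_of_one_le_left (log_nonneg ((one_le_div hcu).2 hu)) hone
  · have hRu : R ≤ ‖c - u‖ := by rw [← dist_eq_norm]; exact (not_le.1 (mem_closedBall'.not.1 hu)).le
    simpa [hu] using log_nonpos (by positivity) ((div_le_one hcu).2 hRu)

theorem sum_posLog_add_log_le_circleAverage {f : ℂ → ℂ} {c : ℂ} {R : ℝ} (hR : 0 < R)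
    (hf : AnalyticOnNhd ℂ f (closedBall c R)) (hfc : f c ≠ 0) {T : Finset ℂ}
    (hT : ∀ u ∈ T, f u = 0) :
    ∑ u ∈ T, log⁺ (R / ‖c - u‖) + log ‖f c‖ ≤ circleAverage (log ‖f ·‖) c R := by
  classical
  have hfin := (divisor f (closedBall c R)).finiteSupport (isCompact_closedBall c R)
  have hjensen := (abs_of_pos hR ▸ hf :).circleAverage_log_norm hR.ne' hfc
  rw [abs_of_pos hR, finsum_eq_sum_of_support_subset (s := T ∪ hfin.toFinset)] at hjensen
  · rw [hjensen]
    gcongr ?_ + _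
    exact (Finset.sum_le_sum fun u hu ↦ posLog_le_divisor_mul_log hR hf hfc (hT u hu)).trans
      (Finset.sum_le_sum_of_subset_of_nonneg Finset.subset_union_left
        fun u _ _ ↦ divisor_mul_log_nonneg hf u)
  · intro u hu
    simp only [Finset.coe_union, Finite.coe_toFinset, mem_union]
    exact Or.inr fun h ↦ hu (by simp [h])

lemma circleMap_zero_sq_eq_sq (r θ : ℝ) :
    circleMap 0 (r ^ 2) θ = circleMap 0 r (θ / 2) ^ 2 := by
  simp only [circleMap, zero_add, mul_pow, ← Complex.exp_nat_mul]
  push_cast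
  ring_nf

lemma integral_sin_half : ∫ θ in (0 : ℝ)..2 * π, sin (θ / 2) = 4 := by
  rw [intervalIntegral.integral_comp_div _ two_ne_zero, zero_div,
    mul_div_cancel_left₀ _ two_ne_zero, integral_sin, cos_zero, cos_pi]
  norm_num

lemma sum_le_prod_one_add {ι : Type*} {f : ι → ℝ} (S : Finset ι) (hf : ∀ k, 0 ≤ f k) :
    ∑ k ∈ S, f k ≤ ∏ k ∈ S, (1 + f k) := by
  classical
  suffices h : 1 + ∑ k ∈ S, f k ≤ ∏ k ∈ S, (1 + f k) by linarith
  induction S using Finset.induction_on with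
  | empty => simp
  | insert k S hk ih =>
    rw [Finset.sum_insert hk, Finset.prod_insert hk]
    have hsum := Finset.sum_nonneg fun i (_ : i ∈ S) ↦ hf i
    nlinarith [mul_le_mul_of_nonneg_left ih (hf k), mul_nonneg (hf k) hsum]

/-- Entire functions `f` with `f 0 = 1` such that `w ↦ f (w ^ 2)` has exponential type at most `σ`
and is bounded by `1` on the real line, in the form of a single inequality. The model is
`cos (σ √u)`. -/
structure IsCosineLike (f : ℂ → ℂ) (σ : ℝ) : Prop where
  type_nonneg : 0 ≤ σ
  differentiable : Differentiable ℂ f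
  map_zero : f 0 = 1
  norm_sq_le : ∀ w, ‖f (w ^ 2)‖ ≤ exp (σ * |w.im|)

namespace IsCosineLike

variable {f : ℂ → ℂ} {σ : ℝ}

lemma comp_div_sq (hf : IsCosineLike f σ) {κ : ℝ} (hκ : 0 < κ) :
    IsCosineLike (fun u ↦ f (u / (κ : ℂ) ^ 2)) (σ / κ) where
  type_nonneg := div_nonneg hf.type_nonneg hκ.le
  differentiable := hf.differentiable.comp (differentiable_id.div_const _)
  map_zero := by rw [zero_div, hf.map_zero]
  norm_sq_le w := by
    have h := hf.norm_sq_le (w / κ)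
    rwa [Complex.div_ofReal_im, abs_div, abs_of_pos hκ, ← mul_div_assoc, mul_div_right_comm,
      div_pow] at h

lemma log_norm_circleMap_le (hf : IsCosineLike f σ) {r θ : ℝ} (hr : 0 ≤ r)
    (hθ : θ ∈ Icc 0 (2 * π)) :
    log ‖f (circleMap 0 (r ^ 2) θ)‖ ≤ σ * r * sin (θ / 2) := by
  have hsin : 0 ≤ sin (θ / 2) :=
    sin_nonneg_of_nonneg_of_le_pi (by linarith [hθ.1]) (by linarith [hθ.2])
  have him : (circleMap 0 r (θ / 2)).im = r * sin (θ / 2) := by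
    rw [circleMap, zero_add, Complex.im_ofReal_mul, Complex.exp_ofReal_mul_I_im]
  have hle := hf.norm_sq_le (circleMap 0 r (θ / 2))
  rw [← circleMap_zero_sq_eq_sq, him, abs_of_nonneg (by positivity), ← mul_assoc] at hle
  rcases (norm_nonneg (f (circleMap 0 (r ^ 2) θ))).eq_or_lt with h | h
  · rw [← h, log_zero]
    have := hf.type_nonneg
    positivity
  · exact (log_le_iff_le_exp h).2 hle

theorem circleAverage_log_norm_le (hf : IsCosineLike f σ) {r : ℝ} (hr : 0 ≤ r) :
    circleAverage (log ‖f ·‖) 0 (r ^ 2) ≤ 2 * σ / π * r := by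
  have hint : CircleIntegrable (log ‖f ·‖) 0 (r ^ 2) :=
    circleIntegrable_log_norm fun z _ ↦ (hf.differentiable.analyticAt z).meromorphicAt
  calc circleAverage (log ‖f ·‖) 0 (r ^ 2)
      ≤ (2 * π)⁻¹ * ∫ θ in (0 : ℝ)..2 * π, σ * r * sin (θ / 2) := by
        rw [circleAverage_def, smul_eq_mul]
        gcongr
        exact intervalIntegral.integral_mono_on (by positivity) hint
          (Continuous.intervalIntegrable (by fun_prop) _ _)
          fun θ hθ ↦ hf.log_norm_circleMap_le hr hθ
    _ = 2 * σ / π * r := by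
        rw [intervalIntegral.integral_const_mul, integral_sin_half]
        field_simp
        ring

lemma ne_zero_of_eq_zero (hf : IsCosineLike f σ) {u : ℂ} (hu : f u = 0) : u ≠ 0 := by
  rintro rfl
  exact one_ne_zero (hf.map_zero.symm.trans hu)

variable {ι : Type*} {u : ι → ℂ}

theorem sum_posLog_div_norm_le (hf : IsCosineLike f σ) (hu : Function.Injective u)
    (hfu : ∀ k, f (u k) = 0) (S : Finset ι) {s : ℝ} (hs : 0 < s) :
    ∑ k ∈ S, log⁺ (s / ‖u k‖) ≤ 2 * σ / π * √s := by
  have hjensen := sum_posLog_add_log_le_circleAverage (f := f) (c := 0) (T := S.map ⟨u, hu⟩) hs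
    (fun z _ ↦ hf.differentiable.analyticAt z) (by simp [hf.map_zero])
    (by simpa using fun k _ ↦ hfu k)
  have haverage := hf.circleAverage_log_norm_le (sqrt_nonneg s)
  rw [sq_sqrt hs.le] at haverage
  simpa [hf.map_zero] using hjensen.trans haverage

theorem sum_log_one_add_div_norm_le (hf : IsCosineLike f σ) (hu : Function.Injective u)
    (hfu : ∀ k, f (u k) = 0) (S : Finset ι) {x : ℝ} (hx : 0 < x) :
    ∑ k ∈ S, log (1 + x / ‖u k‖) ≤ σ * √x := by
  have h := sum_log_one_add_div_le (b := (‖u ·‖)) (A := 2 * σ / π) (β := 1 / 2)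
    (fun k _ ↦ norm_pos_iff.2 (hf.ne_zero_of_eq_zero (hfu k))) one_half_pos one_half_lt_one
    (fun s hs ↦ by
      rw [← sqrt_eq_rpow]
      exact hf.sum_posLog_div_norm_le hu hfu S hs) hx
  refine h.trans_eq ?_
  rw [← sqrt_eq_rpow, mul_one_div, sin_pi_div_two]
  field_simp

theorem sum_log_one_add_div_norm_sq_le (hf : IsCosineLike f σ) (hu : Function.Injective u)
    (hfu : ∀ k, f (u k) = 0) (S : Finset ι) {x : ℝ} (hx : 0 < x) :
    ∑ k ∈ S, log (1 + (x / ‖u k‖) ^ 2) ≤ σ * √2 * √x := by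
  have hcount : ∀ s, 0 < s → ∑ k ∈ S, log⁺ (s / ‖u k‖ ^ 2) ≤ 4 * σ / π * s ^ (1 / 4 : ℝ) := by
    intro s hs
    have hterm : ∀ k, log⁺ (s / ‖u k‖ ^ 2) = 2 * log⁺ (√s / ‖u k‖) := fun k ↦ by
      rw [← sq_sqrt hs.le, ← div_pow, posLog_pow, sqrt_sq (sqrt_nonneg s), Nat.cast_two]
    have hroot : √√s = s ^ (1 / 4 : ℝ) := by
      rw [sqrt_eq_rpow, sqrt_eq_rpow, ← rpow_mul hs.le]
      norm_num
    calc ∑ k ∈ S, log⁺ (s / ‖u k‖ ^ 2) = 2 * ∑ k ∈ S, log⁺ (√s / ‖u k‖) := by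
          rw [Finset.mul_sum, Finset.sum_congr rfl fun k _ ↦ hterm k]
      _ ≤ 2 * (2 * σ / π * √√s) := by
          gcongr
          exact hf.sum_posLog_div_norm_le hu hfu S (sqrt_pos.2 hs)
      _ = 4 * σ / π * s ^ (1 / 4 : ℝ) := by rw [hroot]; ring
  have hlog := sum_log_one_add_div_le
    (fun k _ ↦ pow_pos (norm_pos_iff.2 (hf.ne_zero_of_eq_zero (hfu k))) 2) (by norm_num)
    (by norm_num) hcount (pow_pos hx 2)
  have hroot : (x ^ 2) ^ (1 / 4 : ℝ) = √x := by
    rw [sqrt_eq_rpow, ← rpow_natCast_mul hx.le]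
    norm_num
  rw [hroot, mul_one_div, sin_pi_div_four] at hlog
  simp only [div_pow]
  refine hlog.trans_eq ?_
  field_simp
  rw [sq_sqrt zero_le_two]

theorem prod_one_add_div_norm_le (hf : IsCosineLike f σ) (hu : Function.Injective u)
    (hfu : ∀ k, f (u k) = 0) (S : Finset ι) {x : ℝ} (hx : 0 ≤ x) :
    ∏ k ∈ S, (1 + x / ‖u k‖) ≤ exp (σ * √x) := by
  rcases hx.eq_or_lt with rfl | hx
  · simp
  have hpos : ∀ k ∈ S, 0 < 1 + x / ‖u k‖ := fun k _ ↦ by positivity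
  rw [← log_le_iff_le_exp (Finset.prod_pos hpos), log_prod fun k hk ↦ (hpos k hk).ne']
  exact hf.sum_log_one_add_div_norm_le hu hfu S hx

theorem prod_one_add_div_norm_sq_le (hf : IsCosineLike f σ) (hu : Function.Injective u)
    (hfu : ∀ k, f (u k) = 0) (S : Finset ι) {x : ℝ} (hx : 0 ≤ x) :
    ∏ k ∈ S, (1 + (x / ‖u k‖) ^ 2) ≤ exp (σ * √2 * √x) := by
  rcases hx.eq_or_lt with rfl | hx
  · simp
  have hpos : ∀ k ∈ S, 0 < 1 + (x / ‖u k‖) ^ 2 := fun k _ ↦ by positivity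
  rw [← log_le_iff_le_exp (Finset.prod_pos hpos), log_prod fun k hk ↦ (hpos k hk).ne']
  exact hf.sum_log_one_add_div_norm_sq_le hu hfu S hx

theorem summable_norm_div (hf : IsCosineLike f σ) (hu : Function.Injective u)
    (hfu : ∀ k, f (u k) = 0) (z : ℂ) : Summable fun k ↦ ‖z / u k‖ := by
  refine summable_of_sum_le (c := exp (σ * √‖z‖)) (fun _ ↦ norm_nonneg _) fun S ↦ ?_
  refine (sum_le_prod_one_add S fun k ↦ norm_nonneg _).trans ?_
  simpa only [norm_div] using hf.prod_one_add_div_norm_le hu hfu S (norm_nonneg z)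

theorem multipliable_one_add_div (hf : IsCosineLike f σ) (hu : Function.Injective u)
    (hfu : ∀ k, f (u k) = 0) (z : ℂ) : Multipliable fun k ↦ 1 + z / u k :=
  multipliable_one_add_of_summable (hf.summable_norm_div hu hfu z)

lemma norm_tprod_one_add_div_le_of_forall (hf : IsCosineLike f σ) (hu : Function.Injective u)
    (hfu : ∀ k, f (u k) = 0) {z : ℂ} {B : ℝ} (hB : ∀ S : Finset ι, ∏ k ∈ S, ‖1 + z / u k‖ ≤ B) :
    ‖∏' k, (1 + z / u k)‖ ≤ B := by
  have h := hf.multipliable_one_add_div hu hfu z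
  rw [h.norm_tprod]
  exact h.norm.tprod_le_of_prod_le hB

theorem norm_tprod_one_add_div_le (hf : IsCosineLike f σ) (hu : Function.Injective u)
    (hfu : ∀ k, f (u k) = 0) (z : ℂ) :
    ‖∏' k, (1 + z / u k)‖ ≤ exp (σ * √‖z‖) := by
  refine hf.norm_tprod_one_add_div_le_of_forall hu hfu fun S ↦ ?_
  refine (Finset.prod_le_prod (fun _ _ ↦ norm_nonneg _) fun k _ ↦ ?_).trans
    (hf.prod_one_add_div_norm_le hu hfu S (norm_nonneg z))
  simpa only [norm_one, norm_div] using norm_add_le 1 (z / u k)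

theorem norm_tprod_one_add_I_mul_div_le {a : ι → ℝ} (hf : IsCosineLike f σ)
    (ha : Function.Injective a) (hfa : ∀ k, f (a k) = 0) (x : ℝ) :
    ‖∏' k, (1 + Complex.I * x / a k)‖ ≤ exp (σ * √(|x| / 2)) := by
  have hu : Function.Injective fun k ↦ (a k : ℂ) := Complex.ofReal_injective.comp ha
  refine hf.norm_tprod_one_add_div_le_of_forall hu hfa fun S ↦ ?_
  have hterm : ∀ k, ‖1 + Complex.I * x / a k‖ ^ 2 = 1 + (|x| / ‖(a k : ℂ)‖) ^ 2 := fun k ↦ by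
    rw [mul_div_assoc, mul_comm, ← Complex.ofReal_div, ← Complex.ofReal_one, Complex.sq_norm,
      Complex.normSq_add_mul_I, Complex.norm_real, norm_eq_abs, ← abs_div, sq_abs, one_pow]
  have hexp : exp (σ * √(|x| / 2)) ^ 2 = exp (σ * √2 * √|x|) := by
    rw [← exp_nat_mul, sqrt_div (abs_nonneg x)]
    congr 1
    field_simp
    rw [sq_sqrt zero_le_two, Nat.cast_two]
    ring
  rw [← pow_le_pow_iff_left₀ (by positivity) (by positivity) two_ne_zero, hexp,
    ← Finset.prod_pow, Finset.prod_congr rfl fun k _ ↦ hterm k]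
  exact hf.prod_one_add_div_norm_sq_le hu hfa S (abs_nonneg x)

end IsCosineLike

end Jensen

section CosineTransform

open Complex Metric

lemma norm_cos_le_exp_abs_im (w : ℂ) : ‖cos w‖ ≤ Real.exp |w.im| := by
  have hbound : ∀ z : ℂ, |z.re| = |w.im| → ‖exp z‖ ≤ Real.exp |w.im| := fun z hz ↦ by
    rw [norm_exp, Real.exp_le_exp, ← hz]
    exact le_abs_self _
  have h₁ := hbound (w * I) (by simp)
  have h₂ := hbound (-w * I) (by simp)
  rw [cos, norm_div, norm_ofNat]
  linarith [norm_add_le (exp (w * I)) (exp (-w * I))]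

/-- The function `u ↦ ∫ cos √(u s) dμ(s)`, for a measure `μ` on `[0, 1]`. It is written as a power
series in the moments of `μ`, which makes it visibly entire and avoids choosing a branch of the
square root. -/
noncomputable def cosineTransform (μ : Measure ℝ) (u : ℂ) : ℂ :=
  ∑' m : ℕ, (-1) ^ m * ((∫ s, s ^ m ∂μ : ℝ) : ℂ) / (2 * m).factorial * u ^ m

variable {μ : Measure ℝ} [IsProbabilityMeasure μ]

lemma abs_integral_pow_le_one (hμ : ∀ᵐ s ∂μ, s ∈ Icc 0 1) (m : ℕ) : |∫ s, s ^ m ∂μ| ≤ 1 := by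
  have h : ∀ᵐ s ∂μ, ‖s ^ m‖ ≤ 1 := hμ.mono fun s hs ↦ by
    rw [norm_pow, Real.norm_of_nonneg hs.1]
    exact pow_le_one₀ hs.1 hs.2
  simpa using norm_integral_le_of_norm_le_const h

lemma norm_cosineTransform_term_le (hμ : ∀ᵐ s ∂μ, s ∈ Icc 0 1) {u : ℂ} {r : ℝ}
    (hu : ‖u‖ ≤ r ^ 2) (m : ℕ) :
    ‖(-1) ^ m * ((∫ s, s ^ m ∂μ : ℝ) : ℂ) / (2 * m).factorial * u ^ m‖ ≤
      r ^ (2 * m) / (2 * m).factorial := by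
  calc _ = |∫ s, s ^ m ∂μ| * ‖u‖ ^ m / (2 * m).factorial := by
        simp only [norm_mul, norm_div, norm_pow, norm_neg, norm_one, one_pow, one_mul, norm_real,
          Real.norm_eq_abs, norm_natCast]
        ring
    _ ≤ 1 * (r ^ 2) ^ m / (2 * m).factorial := by
        gcongr
        exact abs_integral_pow_le_one hμ m
    _ = r ^ (2 * m) / (2 * m).factorial := by rw [one_mul, pow_mul]

lemma differentiable_cosineTransform (hμ : ∀ᵐ s ∂μ, s ∈ Icc 0 1) :
    Differentiable ℂ (cosineTransform μ) := by
  intro u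
  have hu : u ∈ ball 0 ((‖u‖ + 1) ^ 2) := by
    rw [mem_ball_zero_iff]
    nlinarith [norm_nonneg u]
  have hon : DifferentiableOn ℂ (cosineTransform μ) (ball 0 ((‖u‖ + 1) ^ 2)) :=
    differentiableOn_tsum_of_summable_norm (Real.hasSum_cosh (‖u‖ + 1)).summable
      (fun m ↦ by fun_prop) isOpen_ball
      fun m w hw ↦ norm_cosineTransform_term_le hμ (mem_ball_zero_iff.1 hw).le m
  exact hon.differentiableAt (isOpen_ball.mem_nhds hu)

lemma hasSum_integral_cos_mul_sqrt (hμ : ∀ᵐ s ∂μ, s ∈ Icc 0 1) (w : ℂ) :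
    HasSum (fun m : ℕ ↦ ∫ s : ℝ, (-1) ^ m * (w * √s) ^ (2 * m) / ((2 * m).factorial : ℂ) ∂μ)
      (∫ s, cos (w * √s) ∂μ) := by
  refine hasSum_integral_of_dominated_convergence
    (fun m (_ : ℝ) ↦ ‖w‖ ^ (2 * m) / (2 * m).factorial)
    (fun m ↦ (by fun_prop : Continuous _).aestronglyMeasurable)
    (fun m ↦ hμ.mono fun s hs ↦ ?_)
    (.of_forall fun _ ↦ (Real.hasSum_cosh ‖w‖).summable) (integrable_const _)
    (.of_forall fun s ↦ hasSum_cos (w * √s))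
  simp only [norm_mul, norm_div, norm_pow, norm_neg, norm_one, one_pow, one_mul, norm_real,
    norm_natCast, Real.norm_of_nonneg (Real.sqrt_nonneg s)]
  gcongr
  exact mul_le_of_le_one_right (norm_nonneg w) (Real.sqrt_le_one.2 hs.2)

lemma cosineTransform_sq (hμ : ∀ᵐ s ∂μ, s ∈ Icc 0 1) (w : ℂ) :
    cosineTransform μ (w ^ 2) = ∫ s, cos (w * √s) ∂μ := by
  rw [← (hasSum_integral_cos_mul_sqrt hμ w).tsum_eq, cosineTransform]
  refine tsum_congr fun m ↦ ?_
  have hpow : ∀ᵐ s : ℝ ∂μ, (-1) ^ m * (w * √s) ^ (2 * m) / ((2 * m).factorial : ℂ) =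
      (-1) ^ m / (2 * m).factorial * (w ^ 2) ^ m * ((s ^ m : ℝ) : ℂ) := hμ.mono fun s hs ↦ by
    rw [mul_pow, pow_mul w, pow_mul (√s : ℂ), ← ofReal_pow, Real.sq_sqrt hs.1, ofReal_pow]
    ring
  rw [integral_congr_ae hpow, integral_const_mul, integral_complex_ofReal]
  ring

theorem isCosineLike_cosineTransform (hμ : ∀ᵐ s ∂μ, s ∈ Icc 0 1) :
    IsCosineLike (cosineTransform μ) 1 where
  type_nonneg := zero_le_one
  differentiable := differentiable_cosineTransform hμ
  map_zero := by
    have h := cosineTransform_sq hμ 0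
    simpa using h
  norm_sq_le w := by
    rw [cosineTransform_sq hμ, one_mul]
    have h : ∀ᵐ s ∂μ, ‖cos (w * √s)‖ ≤ Real.exp |w.im| := hμ.mono fun s hs ↦ by
      refine (norm_cos_le_exp_abs_im _).trans (Real.exp_le_exp.2 ?_)
      rw [im_mul_ofReal, abs_mul, abs_of_nonneg (Real.sqrt_nonneg s)]
      exact mul_le_of_le_one_right (abs_nonneg _) (Real.sqrt_le_one.2 hs.2)
    simpa using norm_integral_le_of_norm_le_const h

end CosineTransform

section Beta

open Real ProbabilityTheory

lemma measurable_betaPDF (α β : ℝ) : Measurable (betaPDF α β) :=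
  (measurable_betaPDFReal α β).ennreal_ofReal

lemma ae_mem_Ioo_betaMeasure (α β : ℝ) : ∀ᵐ s ∂betaMeasure α β, s ∈ Ioo 0 1 := by
  rw [betaMeasure, ae_withDensity_iff (measurable_betaPDF α β)]
  refine .of_forall fun s hs ↦ by_contra fun h ↦ hs ?_
  rw [betaPDF, betaPDFReal, if_neg (mt mem_Ioo.2 h), ENNReal.ofReal_zero]

lemma integral_betaMeasure {α β : ℝ} (hα : 0 < α) (hβ : 0 < β) (g : ℝ → ℝ) :
    ∫ s, g s ∂betaMeasure α β =
      (beta α β)⁻¹ * ∫ s in Ioo 0 1, s ^ (α - 1) * (1 - s) ^ (β - 1) * g s := by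
  rw [betaMeasure, integral_withDensity_eq_integral_toReal_smul
      (measurable_betaPDF α β) (.of_forall fun _ ↦ ENNReal.ofReal_lt_top),
    ← integral_const_mul, ← integral_indicator measurableSet_Ioo]
  refine integral_congr_ae (.of_forall fun s ↦ ?_)
  by_cases hs : s ∈ Ioo 0 1
  · have hpos := betaPDFReal_pos hs.1 hs.2 hα hβ
    simp only [betaPDF, ENNReal.toReal_ofReal hpos.le, indicator_of_mem hs, smul_eq_mul]
    rw [betaPDFReal, if_pos (mem_Ioo.1 hs)]
    ring
  · simp only [indicator_of_notMem hs, betaPDF, betaPDFReal, if_neg (mt mem_Ioo.2 hs),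
      ENNReal.ofReal_zero, ENNReal.toReal_zero, zero_smul]

theorem integral_pow_betaMeasure {α β : ℝ} (hα : 0 < α) (hβ : 0 < β) (m : ℕ) :
    ∫ s, s ^ m ∂betaMeasure α β = beta (α + m) β / beta α β := by
  have hm : 0 < α + m := by positivity
  rw [integral_betaMeasure hα hβ, ← setIntegral_rpow_mul_one_sub_rpow hm hβ, div_eq_inv_mul]
  congr 1
  refine setIntegral_congr_fun measurableSet_Ioo fun s hs ↦ ?_
  simp only [add_sub_right_comm α, rpow_add_natCast hs.1.ne']
  ring

lemma Gamma_half_add_natCast (m : ℕ) :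
    Gamma (1 / 2 + m) = (2 * m).factorial / (4 ^ m * m.factorial) * Gamma (1 / 2) := by
  induction m with
  | zero => simp
  | succ m ih =>
    have hm : (1 / 2 + m : ℝ) ≠ 0 := by positivity
    rw [Nat.cast_succ, ← add_assoc, Gamma_add_one hm, ih, mul_add_one 2 m,
      Nat.factorial_succ, Nat.factorial_succ, Nat.factorial_succ]
    push_cast
    field_simp
    ring

lemma beta_div_beta_right {β : ℝ} (hβ : 0 < β) (α α' : ℝ) :
    beta α' β / beta α β = Gamma α' * Gamma (α + β) / (Gamma α * Gamma (α' + β)) := by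
  have := Gamma_pos_of_pos hβ
  rw [beta, beta]
  field_simp

lemma integral_pow_betaMeasure_half {ν : ℝ} (hν : -1 / 2 < ν) (m : ℕ) :
    ∫ s, s ^ m ∂betaMeasure (1 / 2) (ν + 1 / 2) =
      (2 * m).factorial * Gamma (ν + 1) / (4 ^ m * m.factorial * Gamma (m + ν + 1)) := by
  have hβ : 0 < ν + 1 / 2 := by linarith
  have := Gamma_pos_of_pos (s := 1 / 2) one_half_pos
  rw [integral_pow_betaMeasure one_half_pos hβ, beta_div_beta_right hβ, Gamma_half_add_natCast,
    show (1 / 2 : ℝ) + m + (ν + 1 / 2) = m + ν + 1 by ring,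
    show (1 / 2 : ℝ) + (ν + 1 / 2) = ν + 1 by ring]
  field_simp

-- Poisson's integral representation of `J_ν`, expanded in powers of `x`.
theorem cosineTransform_betaMeasure_sq {ν x : ℝ} (hν : -1 / 2 < ν) (hx : 0 < x) :
    cosineTransform (betaMeasure (1 / 2) (ν + 1 / 2)) ((x : ℂ) ^ 2) =
      ((Gamma (ν + 1) / (x / 2) ^ ν * besselJ ν x : ℝ) : ℂ) := by
  rw [besselJ, ← tsum_mul_left, Complex.ofReal_tsum, cosineTransform]
  refine tsum_congr fun m ↦ ?_
  have : 0 < (x / 2) ^ ν := by positivity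
  have hpow : (x / 2) ^ (2 * (m : ℝ) + ν) = (x ^ 2) ^ m / 4 ^ m * (x / 2) ^ ν := by
    rw [rpow_add (by positivity), ← Nat.cast_two, ← Nat.cast_mul, rpow_natCast, pow_mul,
      Nat.cast_two, div_pow x, div_pow]
    norm_num
  rw [integral_pow_betaMeasure_half hν, hpow]
  norm_cast
  push_cast
  field_simp

theorem isCosineLike_cosineTransform_betaMeasure {ν : ℝ} (hν : -1 / 2 < ν) :
    IsCosineLike (cosineTransform (betaMeasure (1 / 2) (ν + 1 / 2))) 1 :=
  have := isProbabilityMeasureBeta (α := 1 / 2) (β := ν + 1 / 2) one_half_pos (by linarith)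
  isCosineLike_cosineTransform ((ae_mem_Ioo_betaMeasure _ _).mono fun _ hs ↦ Ioo_subset_Icc_self hs)

end Beta

theorem stmt12_general (ν κ : ℝ) (hν : -1 / 2 < ν) (hκ : 0 < κ) {ι : Type*} (j : ι → ℝ)
    (hj : Function.Injective j) (hpos : ∀ k, 0 < j k) (hzero : ∀ k, besselJ ν (j k) = 0) :
    (∀ z : ℂ, ‖∏' k, (1 + Complex.I * z / ((κ * j k : ℝ) : ℂ) ^ 2)‖ ≤
      Real.exp (Real.sqrt ‖z‖ / κ)) ∧
    (∀ x : ℝ, ‖∏' k, (1 + Complex.I * (x : ℂ) / ((κ * j k : ℝ) : ℂ) ^ 2)‖ ≤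
      Real.exp (Real.sqrt |x| / (Real.sqrt 2 * κ))) := by
  have hF := (isCosineLike_cosineTransform_betaMeasure hν).comp_div_sq hκ
  have hinj : Function.Injective fun k ↦ (κ * j k) ^ 2 := fun k l hkl ↦ by
    have := hpos k
    have := hpos l
    rwa [sq_eq_sq₀ (by positivity) (by positivity), mul_right_inj' hκ.ne', hj.eq_iff] at hkl
  have hroot : ∀ k, cosineTransform (ProbabilityTheory.betaMeasure (1 / 2) (ν + 1 / 2))
      ((((κ * j k) ^ 2 : ℝ) : ℂ) / (κ : ℂ) ^ 2) = 0 := fun k ↦ by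
    rw [Complex.ofReal_pow, ← div_pow, ← Complex.ofReal_div, mul_div_cancel_left₀ _ hκ.ne',
      cosineTransform_betaMeasure_sq hν (hpos k), hzero k, mul_zero, Complex.ofReal_zero]
  constructor
  · intro z
    have h := hF.norm_tprod_one_add_div_le (Complex.ofReal_injective.comp hinj) hroot
      (Complex.I * z)
    simpa [div_eq_inv_mul] using h
  · intro x
    have h := hF.norm_tprod_one_add_I_mul_div_le hinj hroot x
    rw [Real.sqrt_div' _ zero_le_two] at h
    simpa [div_eq_inv_mul, mul_assoc] using h

theorem stmt12 (ν κ : ℝ) (hν : 0 ≤ ν) (hκ : 0 < κ) (j : ℕ → ℝ)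
    (hj : IsBesselZeros ν j) :
    (∀ z : ℂ, ‖∏' k : ℕ, (1 + Complex.I * z / ((κ * j k : ℝ) : ℂ) ^ 2)‖ ≤
      Real.exp (Real.sqrt ‖z‖ / κ)) ∧
    (∀ x : ℝ, ‖∏' k : ℕ, (1 + Complex.I * (x : ℂ) / ((κ * j k : ℝ) : ℂ) ^ 2)‖ ≤
      Real.exp (Real.sqrt |x| / (Real.sqrt 2 * κ))) :=
  stmt12_general ν κ (by linarith) hκ j hj.1.injective hj.2.1 hj.2.2.1
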